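/- arXiv:2504.03211 — 3 statements merged into one kernel-verified Lean document; each statement's English description precedes it below -/
import Mathlib

section
/- Fix any t ≥ 1 and ε ≥ 0, and let χ be a feasible bi-event post-processing plan. Then the predictor f generated by χ is well-defined (each f_i is a finitely supported probability distribution on [0,1]) and is (ε,ℓ_t)-calibrated, i.e., ECE_t(f) ≤ ε. -/
open Finset

noncomputable section

namespace PersuasiveCalibration

/-- The environment of the persuasive calibration problem: `n` events with
probabilities `lam i > 0` summing to one and sorted expected outcomes `theta i ∈ [0,1]`. -/
structure Setup (n : ℕ) : Type where
  lam : Fin n → ℝ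
  theta : Fin n → ℝ
  lam_pos : ∀ i, 0 < lam i
  lam_sum : ∑ i, lam i = 1
  theta_mono : Monotone theta
  theta_mem : ∀ i, theta i ∈ Set.Icc (0 : ℝ) 1

variable {n : ℕ}

/-- A finitely supported probability distribution on `[0,1]`. -/
def IsDist (μ : ℝ →₀ ℝ) : Prop :=
  (∀ p, 0 ≤ μ p) ∧ (∀ p ∈ μ.support, p ∈ Set.Icc (0 : ℝ) 1) ∧ (∑ p ∈ μ.support, μ p) = 1

/-- A predictor assigns to each event a finitely supported probability distribution on `[0,1]`. -/
def IsPredictor (f : Fin n → ℝ →₀ ℝ) : Prop := ∀ i, IsDist (f i)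

/-- The (unconditional) prediction space of a predictor. -/
def suppF (f : Fin n → ℝ →₀ ℝ) : Finset ℝ := Finset.univ.biUnion fun i => (f i).support

/-- The marginalized predictor `f(p) = ∑ i, λ i * f i p`. -/
def marginal (S : Setup n) (f : Fin n → ℝ →₀ ℝ) (p : ℝ) : ℝ := ∑ i, S.lam i * f i p

/-- The true expected outcome conditional on the prediction `p`. -/
def kappa (S : Setup n) (f : Fin n → ℝ →₀ ℝ) (p : ℝ) : ℝ :=
  (∑ i, S.lam i * f i p * S.theta i) / marginal S f p

/-- The `ℓ_t`-norm expected calibration error of a predictor. -/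
def ECE (S : Setup n) (t : ℝ) (f : Fin n → ℝ →₀ ℝ) : ℝ :=
  (∑ p ∈ suppF f, marginal S f p * |kappa S f p - p| ^ t) ^ (1 / t)

/-- The principal's expected payoff from predictor `f` with indirect utilities `U i`. -/
def payoff (S : Setup n) (U : Fin n → ℝ → ℝ) (f : Fin n → ℝ →₀ ℝ) : ℝ :=
  ∑ i, S.lam i * ∑ p ∈ (f i).support, f i p * U i p

/-- The principal's payoff in the event-independent setting. -/
def payoffEI (S : Setup n) (U : ℝ → ℝ) (f : Fin n → ℝ →₀ ℝ) : ℝ :=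
  payoff S (fun _ => U) f

/-- A predictor is perfectly calibrated if `κ(q) = q` on its support. -/
def PerfectlyCalibrated (S : Setup n) (g : Fin n → ℝ →₀ ℝ) : Prop :=
  ∀ q ∈ suppF g, kappa S g q = q

/-- An event-independent post-processing plan: a finitely supported probability
distribution on `[0,1] × [0,1]`; the first coordinate is `q`, the second is `p`. -/
def IsPlan (χ : ℝ × ℝ →₀ ℝ) : Prop :=
  (∀ x, 0 ≤ χ x) ∧ (∀ x ∈ χ.support, x.1 ∈ Set.Icc (0 : ℝ) 1 ∧ x.2 ∈ Set.Icc (0 : ℝ) 1) ∧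
    (∑ x ∈ χ.support, χ x) = 1

/-- The `ℓ_t` calibration cost `∑ χ(q,p) |q - p|^t` of a plan. -/
def planCost (t : ℝ) (χ : ℝ × ℝ →₀ ℝ) : ℝ := ∑ x ∈ χ.support, χ x * |x.1 - x.2| ^ t

/-- The `q`-marginal `∑_p χ(q, p)` of a plan. -/
def planMargQ (χ : ℝ × ℝ →₀ ℝ) (q : ℝ) : ℝ :=
  ∑ x ∈ χ.support.filter fun x => x.1 = q, χ x

/-- Feasibility of a post-processing plan for a perfectly calibrated predictor `g` and
an `ℓ_t` ECE budget `ε`. -/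
def FeasiblePlan (S : Setup n) (t ε : ℝ) (g : Fin n → ℝ →₀ ℝ) (χ : ℝ × ℝ →₀ ℝ) : Prop :=
  planCost t χ ≤ ε ^ t ∧ ∀ q, planMargQ χ q = marginal S g q

/-- The value `f_i(p) = ∑_q (g̃_i(q)/g(q)) χ(q,p)` of the predictor generated by `(g̃, χ)`. -/
def genVal (S : Setup n) (g : Fin n → ℝ →₀ ℝ) (χ : ℝ × ℝ →₀ ℝ) (i : Fin n) (p : ℝ) : ℝ :=
  ∑ q ∈ suppF g, g i q / marginal S g q * χ (q, p)

/-- A predictor generated by some perfectly calibrated predictor and some feasible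
event-independent post-processing plan. -/
def IsGenerated (S : Setup n) (t ε : ℝ) (f : Fin n → ℝ →₀ ℝ) : Prop :=
  ∃ (g : Fin n → ℝ →₀ ℝ) (χ : ℝ × ℝ →₀ ℝ),
    IsPredictor g ∧ PerfectlyCalibrated S g ∧ IsPlan χ ∧ FeasiblePlan S t ε g χ ∧
      ∀ i p, f i p = genVal S g χ i p

/-- The CDF of a finitely supported distribution. -/
def cdf (μ : ℝ →₀ ℝ) (x : ℝ) : ℝ := ∑ q ∈ μ.support.filter fun q => q ≤ x, μ q

/-- The CDF of the distribution placing mass `λ_i` at `θ_i`. -/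
def priorCdf (S : Setup n) (x : ℝ) : ℝ :=
  ∑ i ∈ Finset.univ.filter fun i => S.theta i ≤ x, S.lam i

/-- `μ` is a mean-preserving contraction of the distribution putting mass `λ_i` on `θ_i`. -/
def MPCprior (S : Setup n) (μ : ℝ →₀ ℝ) : Prop :=
  (∀ s ∈ Set.Icc (0 : ℝ) 1,
      (∫ x in (0 : ℝ)..s, cdf μ x) ≤ ∫ x in (0 : ℝ)..s, priorCdf S x) ∧
    (∫ x in (0 : ℝ)..(1 : ℝ), cdf μ x) = ∫ x in (0 : ℝ)..(1 : ℝ), priorCdf S x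

/-- The objective `∑ χ(q,p) U(p)` of the program LP-TwoStep. -/
def LPobj (U : ℝ → ℝ) (χ : ℝ × ℝ →₀ ℝ) : ℝ := ∑ x ∈ χ.support, χ x * U x.2

/-- Feasibility for the program LP-TwoStep. -/
def LPFeasible (S : Setup n) (ε t : ℝ) (χ : ℝ × ℝ →₀ ℝ) (g : ℝ →₀ ℝ) : Prop :=
  (∀ x, 0 ≤ χ x) ∧
  (∀ x ∈ χ.support, x.1 ∈ Set.Icc (0 : ℝ) 1 ∧ x.2 ∈ Set.Icc (0 : ℝ) 1) ∧
  planCost t χ ≤ ε ^ t ∧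
  (∀ q, planMargQ χ q = g q) ∧ IsDist g ∧ MPCprior S g

/-- The optimal value of LP-TwoStep. -/
def OPTLP (S : Setup n) (ε t : ℝ) (U : ℝ → ℝ) : ℝ :=
  sSup {v | ∃ (χ : ℝ × ℝ →₀ ℝ) (g : ℝ →₀ ℝ), LPFeasible S ε t χ g ∧ v = LPobj U χ}

/-- Symmetric linear-tailed convex function with linear tails `[0, xL]`, `[xH, 1]` and
tail slopes `s1`, `s2` of equal absolute value. -/
def SymLinTailedConvex (Γ : ℝ → ℝ) (xL xH s1 s2 : ℝ) : Prop :=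
  ConvexOn ℝ (Set.Icc (0 : ℝ) 1) Γ ∧ 0 ≤ xL ∧ xL ≤ xH ∧ xH ≤ 1 ∧ |s1| = |s2| ∧
    (∃ c1, ∀ x ∈ Set.Icc (0 : ℝ) xL, Γ x = c1 + s1 * x) ∧
    (∃ c2, ∀ x ∈ Set.Icc xH (1 : ℝ), Γ x = c2 + s2 * x)

/-- Tuples `(i, j, q, p)` indexing a bi-event post-processing plan. -/
abbrev BiTuple (n : ℕ) := Fin n × Fin n × ℝ × ℝ

/-- The contribution ratio `r_{i,j}(q)`. -/
def ratio (S : Setup n) (i j : Fin n) (q : ℝ) : ℝ :=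
  if S.theta i < S.theta j then (S.theta j - q) / (S.theta j - S.theta i) else 1

/-- The contribution of the tuple `x = (i', j', q, p)` to event `i`:
`r_{i,j'}(q)` if `i' = i`, and `1 - r_{i',i}(q)` if `j' = i ≠ i'`. -/
def contrib (S : Setup n) (x : BiTuple n) (i : Fin n) : ℝ :=
  (if x.1 = i then ratio S x.1 x.2.1 x.2.2.1 else 0) +
    (if x.2.1 = i ∧ x.1 ≠ i then 1 - ratio S x.1 x.2.1 x.2.2.1 else 0)

/-- A bi-event post-processing plan. -/
def IsBiPlan (S : Setup n) (χ : BiTuple n →₀ ℝ) : Prop :=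
  (∀ x, 0 ≤ χ x) ∧
    ∀ x ∈ χ.support, x.1 ≤ x.2.1 ∧ x.2.2.1 ∈ Set.Icc (0 : ℝ) 1 ∧
      x.2.2.2 ∈ Set.Icc (0 : ℝ) 1 ∧ S.theta x.1 ≤ x.2.2.1 ∧ x.2.2.1 ≤ S.theta x.2.1

/-- Feasibility of a bi-event post-processing plan for `ℓ_t` ECE budget `ε`. -/
def FeasibleBiPlan (S : Setup n) (t ε : ℝ) (χ : BiTuple n →₀ ℝ) : Prop :=
  IsBiPlan S χ ∧
    (∑ x ∈ χ.support, χ x * |x.2.2.1 - x.2.2.2| ^ t) ≤ ε ^ t ∧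
    ∀ i, (∑ x ∈ χ.support, χ x * contrib S x i) = S.lam i

/-- The value `f_i(p)` of the predictor generated by a bi-event post-processing plan. -/
def genValBi (S : Setup n) (χ : BiTuple n →₀ ℝ) (i : Fin n) (p : ℝ) : ℝ :=
  1 / S.lam i * ∑ x ∈ χ.support.filter fun x => x.2.2.2 = p, χ x * contrib S x i

/-- The objective of LP-TwoStep+: `∑ χ_{i,j}(q,p) U_{i,j}(q,p)`. -/
def biObj (S : Setup n) (U : Fin n → ℝ → ℝ) (χ : BiTuple n →₀ ℝ) : ℝ :=
  ∑ x ∈ χ.support, χ x * (ratio S x.1 x.2.1 x.2.2.1 * U x.1 x.2.2.2 +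
    (1 - ratio S x.1 x.2.1 x.2.2.1) * U x.2.1 x.2.2.2)

/-- The optimal value of LP-TwoStep+. -/
def OPTBi (S : Setup n) (U : Fin n → ℝ → ℝ) (t ε : ℝ) : ℝ :=
  sSup {v | ∃ χ : BiTuple n →₀ ℝ, FeasibleBiPlan S t ε χ ∧ v = biObj S U χ}

/-- `U` is piecewise constant with all its discontinuity points in `Z`. -/
def PiecewiseConstWrt (Z : Finset ℝ) (U : ℝ → ℝ) : Prop :=
  ∀ x ∈ Set.Icc (0 : ℝ) 1, ∀ y ∈ Set.Icc (0 : ℝ) 1,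
    (∀ z ∈ Z, z ∉ Set.uIcc x y) → U x = U y

/-- The bound `S = ⌈2 ln(1/δ) / ln(1+δ)⌉` of the second discretization layer. -/
def Sbound (δ : ℝ) : ℕ := ⌈2 * Real.log (1 / δ) / Real.log (1 + δ)⌉₊

/-- The instance-dependent two-layer discretized set `S_δ`. -/
def gridSet (S : Setup n) (Z : Finset ℝ) (ε t δ : ℝ) : Set ℝ :=
  ({x : ℝ | ∃ k : ℕ, x = (k : ℝ) * δ} ∪ {(1 : ℝ)} ∪ Set.range S.theta ∪ (↑Z : Set ℝ) ∪
      {x : ℝ | ∃ z ∈ (↑Z : Set ℝ) ∪ Set.range S.theta, ∃ s : ℕ, s ≤ Sbound δ ∧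
        (x = z + (ε ^ t * δ * (1 + δ) ^ s) ^ (1 / t) ∨
          x = z - (ε ^ t * δ * (1 + δ) ^ s) ^ (1 / t))}) ∩
    Set.Icc (0 : ℝ) 1

/-- Feasibility for the discretized program LP-DiscTwoStep+. -/
def DiscFeasibleBiPlan (S : Setup n) (Z : Finset ℝ) (t ε δ : ℝ) (χ : BiTuple n →₀ ℝ) : Prop :=
  FeasibleBiPlan S t ε χ ∧
    ∀ x ∈ χ.support, x.2.2.1 ∈ gridSet S Z ε t δ ∧ x.2.2.2 ∈ gridSet S Z ε t δ

/-- The optimal value of LP-DiscTwoStep+. -/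
def OPTBiDisc (S : Setup n) (U : Fin n → ℝ → ℝ) (Z : Finset ℝ) (t ε δ : ℝ) : ℝ :=
  sSup {v | ∃ χ : BiTuple n →₀ ℝ, DiscFeasibleBiPlan S Z t ε δ χ ∧ v = biObj S U χ}

/-- A Bayesian persuasion instance with signal-dependent bias: states `θ_i` with
prior `λ`, actions `A`, sender utility `u a i = u(a, θ_i) ≥ 0`, and receiver utility
determined by `v1 a = v(a,1)` and `v0 a = v(a,0)`. -/
structure PSetup (n : ℕ) (A : Type*) : Type _ where
  lam : Fin n → ℝ
  theta : Fin n → ℝ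
  u : A → Fin n → ℝ
  v1 : A → ℝ
  v0 : A → ℝ
  lam_pos : ∀ i, 0 < lam i
  lam_sum : ∑ i, lam i = 1
  theta_mem : ∀ i, theta i ∈ Set.Icc (0 : ℝ) 1
  u_nonneg : ∀ a i, 0 ≤ u a i

variable {A σT : Type*}

/-- The receiver's utility from action `a` at belief mean `x`. -/
def rcvU (P : PSetup n A) (a : A) (x : ℝ) : ℝ := x * P.v1 a + (1 - x) * P.v0 a

/-- The total probability `m(σ)` of a signal `σ`. -/
def mass [Fintype σT] (P : PSetup n A) (π : Fin n → σT → ℝ) (σ : σT) : ℝ :=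
  ∑ i, P.lam i * π i σ

/-- The biased posterior mean `p(σ)` of the receiver upon signal `σ`. -/
def belief [Fintype σT] (P : PSetup n A) (π : Fin n → σT → ℝ) (b : σT → ℝ) (σ : σT) : ℝ :=
  (b σ + ∑ i, P.lam i * π i σ * P.theta i) / mass P π σ

/-- Validity of a sender strategy `(π, b)`. -/
def ValidStrategy [Fintype σT] (P : PSetup n A) (π : Fin n → σT → ℝ) (b : σT → ℝ) : Prop :=
  (∀ i σ, 0 ≤ π i σ) ∧ (∀ i, ∑ σ, π i σ = 1) ∧
    ∀ σ, 0 < mass P π σ → belief P π b σ ∈ Set.Icc (0 : ℝ) 1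

/-- `astar` is a receiver best-response selection for the strategy `(π, b)`. -/
def BestResponse [Fintype σT] (P : PSetup n A) (π : Fin n → σT → ℝ) (b : σT → ℝ)
    (astar : σT → A) : Prop :=
  ∀ σ, 0 < mass P π σ → ∀ a, rcvU P a (belief P π b σ) ≤ rcvU P (astar σ) (belief P π b σ)

/-- The bounded-rationality constraint on the total bias. -/
def BRconstraint [Fintype σT] (P : PSetup n A) (t ε : ℝ) (π : Fin n → σT → ℝ)
    (b : σT → ℝ) : Prop :=
  (∑ σ, mass P π σ * |b σ / mass P π σ| ^ t) ^ (1 / t) ≤ ε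

/-- The sender's expected payoff from strategy `π` with receiver selection `astar`. -/
def senderPayoff [Fintype σT] (P : PSetup n A) (π : Fin n → σT → ℝ) (astar : σT → A) : ℝ :=
  ∑ i, P.lam i * ∑ σ, π i σ * P.u (astar σ) i

/-- Feasibility for the action-recommendation program P-ActRec. -/
def PActRecFeasible [Fintype A] (P : PSetup n A) (t ε : ℝ)
    (π : Fin n → A → ℝ) (b : A → ℝ) : Prop :=
  (∀ i a, 0 ≤ π i a) ∧ (∀ i, ∑ a, π i a = 1) ∧
  (∀ a, mass P π a = 0 → b a = 0) ∧
  (∑ a, mass P π a * |b a / mass P π a| ^ t) ≤ ε ^ t ∧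
  (∀ a, 0 ≤ b a + ∑ i, P.lam i * π i a * P.theta i) ∧
  (∀ a, b a + ∑ i, P.lam i * π i a * P.theta i ≤ mass P π a) ∧
  ∀ a a' : A,
    (b a + ∑ i, P.lam i * π i a * P.theta i) * P.v1 a' +
        (mass P π a - (b a + ∑ i, P.lam i * π i a * P.theta i)) * P.v0 a' ≤
      (b a + ∑ i, P.lam i * π i a * P.theta i) * P.v1 a +
        (mass P π a - (b a + ∑ i, P.lam i * π i a * P.theta i)) * P.v0 a

/-- The sender-side marginal probability of recommendation `a` (calibration model). -/
def pmass [Fintype A] (S : Setup n) (π : Fin n → A → ℝ) (a : A) : ℝ := ∑ i, S.lam i * π i a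

/-- The biased posterior mean associated with recommendation `a` (calibration model). -/
def pbelief [Fintype A] (S : Setup n) (π : Fin n → A → ℝ) (b : A → ℝ) (a : A) : ℝ :=
  (b a + ∑ i, S.lam i * π i a * S.theta i) / pmass S π a

lemma ratio_mem (S : Setup n) {i j : Fin n} {q : ℝ} (h1 : S.theta i ≤ q) (h2 : q ≤ S.theta j) :
    0 ≤ ratio S i j q ∧ ratio S i j q ≤ 1 := by
  unfold ratio
  split_ifs with h
  · have hd : 0 < S.theta j - S.theta i := by linarith
    refine ⟨div_nonneg (by linarith) hd.le, ?_⟩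
    rw [div_le_one hd]; linarith
  · norm_num

lemma contrib_nonneg (S : Setup n) {x : BiTuple n} (h1 : S.theta x.1 ≤ x.2.2.1)
    (h2 : x.2.2.1 ≤ S.theta x.2.1) (i : Fin n) : 0 ≤ contrib S x i := by
  obtain ⟨ha, hb⟩ := ratio_mem S h1 h2
  unfold contrib
  split_ifs <;> linarith

lemma sum_contrib_mul (S : Setup n) (x : BiTuple n) (w : Fin n → ℝ) :
    ∑ i, contrib S x i * w i = ratio S x.1 x.2.1 x.2.2.1 * w x.1 +
      (1 - ratio S x.1 x.2.1 x.2.2.1) * w x.2.1 := by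
  by_cases h : x.1 = x.2.1
  · have hr : ratio S x.1 x.2.1 x.2.2.1 = 1 := by unfold ratio; simp [h]
    simp [contrib, hr]
  · have : ∀ i, contrib S x i * w i =
        (if x.1 = i then ratio S x.1 x.2.1 x.2.2.1 * w i else 0) +
        (if x.2.1 = i then (1 - ratio S x.1 x.2.1 x.2.2.1) * w i else 0) := by
      intro i
      unfold contrib
      by_cases h1 : x.1 = i
      · have h2 : x.2.1 ≠ i := fun h' => h (h1.trans h'.symm)
        simp [h1, h2]
      · simp [h1]
    simp only [this, Finset.sum_add_distrib]
    simp

lemma sum_contrib (S : Setup n) (x : BiTuple n) : ∑ i, contrib S x i = 1 := by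
  have := sum_contrib_mul S x (fun _ => 1)
  simpa using this

lemma sum_contrib_theta (S : Setup n) {x : BiTuple n} (h1 : S.theta x.1 ≤ x.2.2.1)
    (h2 : x.2.2.1 ≤ S.theta x.2.1) : ∑ i, contrib S x i * S.theta i = x.2.2.1 := by
  rw [sum_contrib_mul]
  unfold ratio
  split_ifs with h
  · have hd : S.theta x.2.1 - S.theta x.1 ≠ 0 := by linarith
    field_simp
    ring
  · linarith

lemma jensen_aux {ι : Type*} (s : Finset ι) (w q : ι → ℝ) (p t : ℝ) (ht : 1 ≤ t)
    (hw : ∀ i ∈ s, 0 ≤ w i) :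
    (∑ i ∈ s, w i) * |(∑ i ∈ s, w i * q i) / (∑ i ∈ s, w i) - p| ^ t ≤
      ∑ i ∈ s, w i * |q i - p| ^ t := by
  have hM := Finset.sum_nonneg hw
  set M := ∑ i ∈ s, w i with hMdef
  rcases hM.eq_or_lt with h0 | hpos
  · rw [← h0, zero_mul]
    exact Finset.sum_nonneg fun i hi => mul_nonneg (hw i hi) (Real.rpow_nonneg (abs_nonneg _) _)
  · have e1 : (∑ i ∈ s, w i * q i) / M - p = ∑ i ∈ s, w i / M * (q i - p) := by
      have : ∑ i ∈ s, w i / M * (q i - p) = (∑ i ∈ s, (w i * q i - w i * p)) / M := by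
        rw [Finset.sum_div]; refine Finset.sum_congr rfl fun i _ => by ring
      rw [this, Finset.sum_sub_distrib, ← Finset.sum_mul, ← hMdef]
      field_simp
    have e2 : |(∑ i ∈ s, w i * q i) / M - p| ≤ ∑ i ∈ s, w i / M * |q i - p| := by
      rw [e1]
      refine (Finset.abs_sum_le_sum_abs _ _).trans (Finset.sum_le_sum fun i hi => ?_)
      rw [abs_mul, abs_of_nonneg (div_nonneg (hw i hi) hpos.le)]
    have e3 := Real.rpow_arith_mean_le_arith_mean_rpow s (fun i => w i / M) (fun i => |q i - p|)
      (fun i hi => div_nonneg (hw i hi) hpos.le)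
      (by rw [← Finset.sum_div, ← hMdef]; exact div_self hpos.ne')
      (fun i _ => abs_nonneg _) ht
    have e4 := (Real.rpow_le_rpow (abs_nonneg _) e2 (by linarith : 0 ≤ t)).trans e3
    refine (mul_le_mul_of_nonneg_left e4 hpos.le).trans (le_of_eq ?_)
    rw [Finset.mul_sum]
    refine Finset.sum_congr rfl fun i _ => ?_
    field_simp

/-- The predictor generated by a feasible bi-event post-processing
plan is a well-defined predictor and is `(ε, ℓ_t)`-calibrated. -/
theorem statement11 {n : ℕ} (S : Setup n) (t ε : ℝ) (ht : 1 ≤ t) (hε : 0 ≤ ε)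
    (χ : BiTuple n →₀ ℝ) (hχ : FeasibleBiPlan S t ε χ) :
    ∃ f : Fin n → ℝ →₀ ℝ,
      (∀ i p, f i p = genValBi S χ i p) ∧ IsPredictor f ∧ ECE S t f ≤ ε := by
  obtain ⟨⟨hnn, hsup⟩, hcost, hlam⟩ := hχ
  have hc : ∀ x ∈ χ.support, ∀ i, 0 ≤ contrib S x i := fun x hx i =>
    contrib_nonneg S (hsup x hx).2.2.2.1 (hsup x hx).2.2.2.2 i
  set T : Finset ℝ := χ.support.image (fun x => x.2.2.2) with hT
  have hmaps : ∀ x ∈ χ.support, x.2.2.2 ∈ T := fun x hx => Finset.mem_image_of_mem _ hx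
  have hgT : ∀ i p, genValBi S χ i p ≠ 0 → p ∈ T := by
    intro i p h
    by_contra hp
    apply h
    unfold genValBi
    rw [Finset.filter_eq_empty_iff.2, Finset.sum_empty, mul_zero]
    intro x hx hxp
    exact hp (hxp ▸ hmaps x hx)
  let f : Fin n → ℝ →₀ ℝ := fun i => Finsupp.onFinset T (genValBi S χ i) (hgT i)
  have hf : ∀ i p, f i p = genValBi S χ i p := fun i p => rfl
  have hfT : ∀ i, (f i).support ⊆ T := fun i => Finsupp.support_onFinset_subset
  have hlf : ∀ i p, S.lam i * f i p =
      ∑ x ∈ χ.support.filter fun x => x.2.2.2 = p, χ x * contrib S x i := by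
    intro i p
    have := (S.lam_pos i).ne'
    rw [hf, genValBi]
    field_simp
  have hmarg : ∀ p, marginal S f p = ∑ x ∈ χ.support.filter fun x => x.2.2.2 = p, χ x := by
    intro p
    unfold marginal
    simp only [hlf]
    rw [Finset.sum_comm]
    refine Finset.sum_congr rfl fun x _ => ?_
    rw [← Finset.mul_sum, sum_contrib, mul_one]
  have hkap : ∀ p, ∑ i, S.lam i * f i p * S.theta i =
      ∑ x ∈ χ.support.filter fun x => x.2.2.2 = p, χ x * x.2.2.1 := by
    intro p
    simp only [hlf, Finset.sum_mul]
    rw [Finset.sum_comm]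
    refine Finset.sum_congr rfl fun x hx => ?_
    have hx' := hsup x (Finset.mem_filter.1 hx).1
    simp only [mul_assoc]
    rw [← Finset.mul_sum, sum_contrib_theta S hx'.2.2.2.1 hx'.2.2.2.2]
  have hterm : ∀ p, 0 ≤ marginal S f p * |kappa S f p - p| ^ t := by
    intro p
    rw [hmarg]
    exact mul_nonneg (Finset.sum_nonneg fun x _ => hnn x) (Real.rpow_nonneg (abs_nonneg _) _)
  refine ⟨f, hf, fun i => ⟨fun p => ?_, fun p hp => ?_, ?_⟩, ?_⟩
  · rw [hf]
    unfold genValBi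
    refine mul_nonneg (one_div_nonneg.2 (S.lam_pos i).le) (Finset.sum_nonneg fun x hx => ?_)
    exact mul_nonneg (hnn x) (hc x (Finset.mem_filter.1 hx).1 i)
  · obtain ⟨x, hx, rfl⟩ := Finset.mem_image.1 (hfT i hp)
    exact (hsup x hx).2.2.1
  · rw [Finset.sum_subset (hfT i) (fun p _ h => Finsupp.notMem_support_iff.1 h)]
    have h1 : S.lam i * ∑ p ∈ T, f i p = S.lam i := by
      rw [Finset.mul_sum]
      simp only [hlf]
      rw [Finset.sum_fiberwise_of_maps_to hmaps (fun x => χ x * contrib S x i)]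
      exact hlam i
    exact mul_left_cancel₀ (S.lam_pos i).ne' (by rw [h1, mul_one])
  · have hle : ∑ p ∈ suppF f, marginal S f p * |kappa S f p - p| ^ t ≤ ε ^ t := by
      have hsub : suppF f ⊆ T := Finset.biUnion_subset.2 fun i _ => hfT i
      refine (Finset.sum_le_sum_of_subset_of_nonneg hsub fun p _ _ => hterm p).trans ?_
      refine le_trans ?_ hcost
      rw [← Finset.sum_fiberwise_of_maps_to hmaps (fun x => χ x * |x.2.2.1 - x.2.2.2| ^ t)]
      refine Finset.sum_le_sum fun p _ => ?_
      unfold kappa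
      rw [hkap, hmarg]
      refine (jensen_aux _ (fun x => χ x) (fun x => x.2.2.1) p t ht fun x _ => hnn x).trans ?_
      refine le_of_eq (Finset.sum_congr rfl fun x hx => ?_)
      rw [(Finset.mem_filter.1 hx).2]
    unfold ECE
    have ht0 : 0 < t := by linarith
    refine (Real.rpow_le_rpow (Finset.sum_nonneg fun p _ => hterm p) hle
      (one_div_nonneg.2 ht0.le)).trans (le_of_eq ?_)
    rw [← Real.rpow_mul hε, mul_one_div_cancel ht0.ne', Real.rpow_one]

end PersuasiveCalibration
end
end

section
/- (Revelation principle for persuasion with signal-dependent bias.) For every sender strategy (π, b) on a finite signal set Σ satisfying the bounded-rationality constraint with budget ε and parameter t, there exists a direct and IC strategy (π†, b†) on signal set A satisfying the same bounded-rationality constraint such that, for every state θ_i and every action a, π†_i(a) = Σ_{σ∈Σ : a*(σ)=a} π_i(σ); in particular, conditional on each state, the distribution of the receiver's chosen action is the same under (π, b) and under (π†, b†), and the sender's payoffs coincide. -/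
open Finset

noncomputable section

namespace PersuasiveCalibration

variable {n : ℕ}

variable {A σT : Type*}

/-- Revelation principle for persuasion with signal-dependent bias:
every valid sender strategy `(π, b)` with a best-response selection `astar` and
bounded-rationality budget `(ε, t)` can be turned into a direct and IC strategy
`(π†, b†)` on the action set which pools signals by recommended action, satisfies the
same bounded-rationality constraint, induces the same conditional action distribution,
and gives the sender the same payoff. -/
theorem statement16 {n : ℕ} {A σT : Type*} [Fintype A] [DecidableEq A] [Fintype σT]
    (P : PSetup n A) (t ε : ℝ) (ht : 1 ≤ t) (hε : 0 ≤ ε)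
    (π : Fin n → σT → ℝ) (b : σT → ℝ) (astar : σT → A)
    (hvalid : ValidStrategy P π b) (hbr : BestResponse P π b astar)
    (hcon : BRconstraint P t ε π b) :
    ∃ (π' : Fin n → A → ℝ) (b' : A → ℝ),
      ValidStrategy P π' b' ∧ BestResponse P π' b' id ∧ BRconstraint P t ε π' b' ∧
      (∀ i a, π' i a = ∑ σ ∈ Finset.univ.filter fun σ => astar σ = a, π i σ) ∧
      senderPayoff P π' id = senderPayoff P π astar := by
  obtain ⟨hπ0, hπ1, hbel⟩ := hvalid
  have hm0 : ∀ σ, 0 ≤ mass P π σ := fun σ =>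
    Finset.sum_nonneg fun i _ => mul_nonneg (P.lam_pos i).le (hπ0 i σ)
  have hz : ∀ σ, mass P π σ = 0 → ∀ i, π i σ = 0 := by
    intro σ h i
    have h1 := (Finset.sum_eq_zero_iff_of_nonneg
      (fun i _ => mul_nonneg (P.lam_pos i).le (hπ0 i σ))).1 h i (Finset.mem_univ i)
    exact (mul_eq_zero.1 h1).resolve_left (P.lam_pos i).ne'
  have hN : ∀ σ, mass P π σ * (b σ / mass P π σ) + ∑ i, P.lam i * π i σ * P.theta i
      = mass P π σ * belief P π b σ := by
    intro σ
    by_cases h : mass P π σ = 0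
    · simp [h, hz σ h]
    · unfold belief
      field_simp
  let F : A → Finset σT := fun a => Finset.univ.filter fun σ => astar σ = a
  let π' : Fin n → A → ℝ := fun i a => ∑ σ ∈ F a, π i σ
  let b' : A → ℝ := fun a => ∑ σ ∈ F a, mass P π σ * (b σ / mass P π σ)
  have hM : ∀ a, mass P π' a = ∑ σ ∈ F a, mass P π σ := by
    intro a
    simp only [mass, π', Finset.mul_sum]
    exact Finset.sum_comm
  have hB : ∀ a, b' a + ∑ i, P.lam i * π' i a * P.theta i
      = ∑ σ ∈ F a, mass P π σ * belief P π b σ := by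
    intro a
    have h1 : ∑ i, P.lam i * π' i a * P.theta i
        = ∑ σ ∈ F a, ∑ i, P.lam i * π i σ * P.theta i := by
      rw [Finset.sum_comm]
      simp only [π', Finset.mul_sum, Finset.sum_mul]
    rw [h1, ← Finset.sum_add_distrib]
    exact Finset.sum_congr rfl fun σ _ => hN σ
  have hMp : ∀ a, 0 < mass P π' a → mass P π' a * belief P π' b' a
      = ∑ σ ∈ F a, mass P π σ * belief P π b σ := by
    intro a ha
    unfold belief
    rw [mul_div_cancel₀ _ ha.ne', hB a]
    rfl
  have hR : ∀ a, 0 < mass P π' a → ∀ c, mass P π' a * rcvU P c (belief P π' b' a)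
      = ∑ σ ∈ F a, mass P π σ * rcvU P c (belief P π b σ) := by
    intro a ha c
    have h1 : ∑ σ ∈ F a, mass P π σ * rcvU P c (belief P π b σ)
        = (∑ σ ∈ F a, mass P π σ * belief P π b σ) * (P.v1 c - P.v0 c)
          + (∑ σ ∈ F a, mass P π σ) * P.v0 c := by
      rw [Finset.sum_mul, Finset.sum_mul, ← Finset.sum_add_distrib]
      refine Finset.sum_congr rfl fun σ _ => ?_
      unfold rcvU
      ring
    rw [h1, ← hMp a ha, ← hM a]
    unfold rcvU
    ring
  have hfib : ∀ f : σT → ℝ, ∑ a, ∑ σ ∈ F a, f σ = ∑ σ, f σ := fun f =>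
    Finset.sum_fiberwise Finset.univ astar f
  refine ⟨π', b', ⟨?_, ?_, ?_⟩, ?_, ?_, fun i a => rfl, ?_⟩
  · exact fun i a => Finset.sum_nonneg fun σ _ => hπ0 i σ
  · intro i
    rw [← hπ1 i]
    exact hfib _
  · intro a ha
    have h0 : ∀ σ, 0 ≤ mass P π σ * belief P π b σ ∧
        mass P π σ * belief P π b σ ≤ mass P π σ := by
      intro σ
      rcases (hm0 σ).eq_or_lt with h | h
      · simp [← h]
      · have := hbel σ h
        exact ⟨mul_nonneg h.le this.1, mul_le_of_le_one_right h.le this.2⟩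
    have h1 : 0 ≤ mass P π' a * belief P π' b' a := by
      rw [hMp a ha]
      exact Finset.sum_nonneg fun σ _ => (h0 σ).1
    have h2 : mass P π' a * belief P π' b' a ≤ mass P π' a * 1 := by
      rw [hMp a ha, mul_one, hM a]
      exact Finset.sum_le_sum fun σ _ => (h0 σ).2
    exact ⟨nonneg_of_mul_nonneg_right h1 ha, le_of_mul_le_mul_left h2 ha⟩
  · intro a ha c
    refine le_of_mul_le_mul_left ?_ ha
    rw [hR a ha, hR a ha]
    refine Finset.sum_le_sum fun σ hσ => ?_
    have hσ' : astar σ = a := (Finset.mem_filter.1 hσ).2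
    rcases (hm0 σ).eq_or_lt with h | h
    · simp [← h]
    · have := hbr σ h c
      rw [hσ'] at this
      exact mul_le_mul_of_nonneg_left this h.le
  · unfold BRconstraint at hcon ⊢
    have hM0 : ∀ a, 0 ≤ mass P π' a := fun a => by
      rw [hM a]
      exact Finset.sum_nonneg fun σ _ => hm0 σ
    refine le_trans (Real.rpow_le_rpow ?_ ?_ (by positivity)) hcon
    · exact Finset.sum_nonneg fun a _ =>
        mul_nonneg (hM0 a) (Real.rpow_nonneg (abs_nonneg _) _)
    rw [← hfib]
    refine Finset.sum_le_sum fun a _ => ?_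
    rcases (hM0 a).eq_or_lt with h | h
    · rw [← h, zero_mul]
      exact Finset.sum_nonneg fun σ _ =>
        mul_nonneg (hm0 σ) (Real.rpow_nonneg (abs_nonneg _) _)
    · have hJ := Real.rpow_arith_mean_le_arith_mean_rpow (F a)
        (fun σ => mass P π σ / mass P π' a) (fun σ => |b σ / mass P π σ|)
        (fun σ _ => div_nonneg (hm0 σ) h.le)
        (by rw [← Finset.sum_div, ← hM a, div_self h.ne']) (fun σ _ => abs_nonneg _) ht
      have hle : |b' a / mass P π' a|
          ≤ ∑ σ ∈ F a, mass P π σ / mass P π' a * |b σ / mass P π σ| := by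
        have h3 : b' a / mass P π' a
            = ∑ σ ∈ F a, mass P π σ / mass P π' a * (b σ / mass P π σ) := by
          simp only [b']
          rw [Finset.sum_div]
          exact Finset.sum_congr rfl fun σ _ => by ring
        rw [h3]
        refine (Finset.abs_sum_le_sum_abs _ _).trans (Finset.sum_le_sum fun σ _ => ?_)
        rw [abs_mul, abs_of_nonneg (div_nonneg (hm0 σ) h.le)]
      have h4 := (Real.rpow_le_rpow (abs_nonneg _) hle (by linarith : (0:ℝ) ≤ t)).trans hJ
      refine (mul_le_mul_of_nonneg_left h4 h.le).trans (le_of_eq ?_)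
      rw [Finset.mul_sum]
      refine Finset.sum_congr rfl fun σ _ => ?_
      rw [← mul_assoc, mul_div_cancel₀ _ h.ne']
  · unfold senderPayoff
    refine Finset.sum_congr rfl fun i _ => ?_
    congr 1
    rw [← hfib]
    refine Finset.sum_congr rfl fun a _ => ?_
    simp only [π', id]
    rw [Finset.sum_mul]
    refine Finset.sum_congr rfl fun σ hσ => ?_
    rw [(Finset.mem_filter.1 hσ).2]

end PersuasiveCalibration
end
end

section
/- (Instance equivalence: from predictor to persuasion strategy.) Fix ε ≥ 0 and t ≥ 1, and let f be a finitely supported (ε,ℓ_t)-calibrated predictor in the persuasive calibration model. Define, for each action a ∈ A, π_i(a) = Σ_{p∈supp(f_i): a*(p)=a} f_i(p) and b(a) = Σ_{p: a*(p)=a} Σ_i λ_i·f_i(p)·(p − θ_i). Then in the associated persuasion instance: (π, b) is a sender strategy with signal set A; for every a with m(a) = Σ_i λ_i·π_i(a) > 0 the biased posterior mean p(a) = (b(a) + Σ_i λ_i·π_i(a)·θ_i)/m(a) lies in [0,1] and a maximizes v(·, p(a)) over A (so the strategy is direct and IC); the bounded-rationality constraint (Σ_{a: m(a)>0} m(a)·|b(a)/m(a)|^t)^{1/t}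 ≤ ε holds; and the sender's payoff when recommendations are followed, Σ_i λ_i·Σ_a π_i(a)·u(a,θ_i), equals V(f). -/
open Finset

noncomputable section

namespace PersuasiveCalibration

variable {n : ℕ}

variable {A σT : Type*}

/-- Instance equivalence, from predictor to persuasion strategy:
an `(ε, ℓ_t)`-calibrated predictor `f` induces, via pooling predictions by the action
they recommend, a direct and IC sender strategy `(π, b)` on the action set which
satisfies the bounded-rationality constraint and whose sender payoff equals `V(f)`. -/
theorem statement18 {n : ℕ} {A : Type*} [Fintype A] [DecidableEq A] (S : Setup n)
    (u0 u1 : Fin n → A → ℝ) (v0 v1 : A → ℝ)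
    (hu : ∀ i a, 0 ≤ u0 i a ∧ 0 ≤ u1 i a)
    (astar : ℝ → A)
    (hastar : ∀ p ∈ Set.Icc (0 : ℝ) 1, ∀ a : A,
      p * v1 a + (1 - p) * v0 a ≤ p * v1 (astar p) + (1 - p) * v0 (astar p))
    (t ε : ℝ) (ht : 1 ≤ t) (hε : 0 ≤ ε)
    (f : Fin n → ℝ →₀ ℝ) (hf : IsPredictor f) (hcal : ECE S t f ≤ ε)
    (π : Fin n → A → ℝ) (b : A → ℝ)
    (hπ : ∀ i a, π i a = ∑ p ∈ (f i).support.filter fun p => astar p = a, f i p)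
    (hb : ∀ a, b a = ∑ p ∈ (suppF f).filter fun p => astar p = a,
        ∑ i, S.lam i * f i p * (p - S.theta i)) :
    (∀ i a, 0 ≤ π i a) ∧ (∀ i, ∑ a, π i a = 1) ∧
    (∀ a, 0 < pmass S π a → pbelief S π b a ∈ Set.Icc (0 : ℝ) 1 ∧
      ∀ a' : A, pbelief S π b a * v1 a' + (1 - pbelief S π b a) * v0 a' ≤
        pbelief S π b a * v1 a + (1 - pbelief S π b a) * v0 a) ∧
    (∑ a, pmass S π a * |b a / pmass S π a| ^ t) ^ (1 / t) ≤ ε ∧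
    (∑ i, S.lam i * ∑ a, π i a * ((1 - S.theta i) * u0 i a + S.theta i * u1 i a)) =
      ∑ i, S.lam i * ∑ p ∈ (f i).support,
        f i p * (S.theta i * u1 i (astar p) + (1 - S.theta i) * u0 i (astar p)) := by
  have hlam := S.lam_pos
  have hf0 : ∀ i p, 0 ≤ f i p := fun i p => (hf i).1 p
  have hsub : ∀ i, (f i).support ⊆ suppF f := fun i p hp => by
    unfold suppF
    exact Finset.mem_biUnion.2 ⟨i, Finset.mem_univ i, hp⟩
  have hmem : ∀ p ∈ suppF f, p ∈ Set.Icc (0:ℝ) 1 := by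
    intro p hp
    unfold suppF at hp
    obtain ⟨i, -, hi⟩ := Finset.mem_biUnion.1 hp
    exact (hf i).2.1 p hi
  have hπ' : ∀ i a, π i a = ∑ p ∈ (suppF f).filter (fun p => astar p = a), f i p := by
    intro i a
    rw [hπ]
    apply Finset.sum_subset (Finset.filter_subset_filter _ (hsub i))
    intro p hp hp'
    by_contra h
    exact hp' (Finset.mem_filter.2 ⟨Finsupp.mem_support_iff.2 h, (Finset.mem_filter.1 hp).2⟩)
  have hw0 : ∀ p, 0 ≤ marginal S f p := fun p =>
    Finset.sum_nonneg fun i _ => mul_nonneg (hlam i).le (hf0 i p)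
  have hm : ∀ a, pmass S π a = ∑ p ∈ (suppF f).filter (fun p => astar p = a), marginal S f p := by
    intro a
    unfold pmass marginal
    rw [Finset.sum_comm]
    refine Finset.sum_congr rfl fun i _ => ?_
    rw [hπ', Finset.mul_sum]
  have hm0 : ∀ a, 0 ≤ pmass S π a := fun a => by
    rw [hm]; exact Finset.sum_nonneg fun p _ => hw0 p
  have hnum : ∀ a, b a + ∑ i, S.lam i * π i a * S.theta i =
      ∑ p ∈ (suppF f).filter (fun p => astar p = a), marginal S f p * p := by
    intro a
    have h1 : ∑ i, S.lam i * π i a * S.theta i =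
        ∑ p ∈ (suppF f).filter (fun p => astar p = a), ∑ i, S.lam i * f i p * S.theta i := by
      rw [Finset.sum_comm]
      refine Finset.sum_congr rfl fun i _ => ?_
      rw [hπ', Finset.mul_sum, Finset.sum_mul]
    rw [h1, hb, ← Finset.sum_add_distrib]
    refine Finset.sum_congr rfl fun p _ => ?_
    unfold marginal
    rw [← Finset.sum_add_distrib, Finset.sum_mul]
    refine Finset.sum_congr rfl fun i _ => ?_
    ring
  have hbk : ∀ p, ∑ i, S.lam i * f i p * (p - S.theta i) =
      marginal S f p * (p - kappa S f p) := by
    intro p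
    have h1 : ∑ i, S.lam i * f i p * (p - S.theta i) =
        marginal S f p * p - ∑ i, S.lam i * f i p * S.theta i := by
      unfold marginal
      rw [Finset.sum_mul, ← Finset.sum_sub_distrib]
      exact Finset.sum_congr rfl fun i _ => by ring
    rw [h1, mul_sub]
    congr 1
    unfold kappa
    by_cases h : marginal S f p = 0
    · rw [h, zero_mul]
      refine Finset.sum_eq_zero fun i hi => ?_
      have := (Finset.sum_eq_zero_iff_of_nonneg
        (fun i _ => mul_nonneg (hlam i).le (hf0 i p))).1 h i hi
      rw [this, zero_mul]
    · field_simp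
  refine ⟨?_, ?_, ?_, ?_, ?_⟩
  · intro i a
    rw [hπ]; exact Finset.sum_nonneg fun p _ => hf0 i p
  · intro i
    simp_rw [hπ]
    rw [Finset.sum_fiberwise]
    exact (hf i).2.2
  · intro a ha
    have hB : pbelief S π b a * pmass S π a =
        ∑ p ∈ (suppF f).filter (fun p => astar p = a), marginal S f p * p := by
      unfold pbelief
      rw [div_mul_cancel₀ _ ha.ne', hnum]
    refine ⟨⟨?_, ?_⟩, ?_⟩
    · unfold pbelief
      rw [hnum]
      refine div_nonneg (Finset.sum_nonneg fun p hp => mul_nonneg (hw0 p) ?_) ha.le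
      exact (hmem p (Finset.mem_filter.1 hp).1).1
    · unfold pbelief
      rw [hnum, div_le_one ha, hm]
      refine Finset.sum_le_sum fun p hp => mul_le_of_le_one_right (hw0 p) ?_
      exact (hmem p (Finset.mem_filter.1 hp).1).2
    · intro a'
      refine le_of_mul_le_mul_right ?_ ha
      have key : ∀ c, (pbelief S π b a * v1 c + (1 - pbelief S π b a) * v0 c) * pmass S π a =
          ∑ p ∈ (suppF f).filter (fun p => astar p = a),
            marginal S f p * (p * v1 c + (1 - p) * v0 c) := by
        intro c
        have : (pbelief S π b a * v1 c + (1 - pbelief S π b a) * v0 c) * pmass S π a =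
          (pbelief S π b a * pmass S π a) * (v1 c - v0 c) + pmass S π a * v0 c := by ring
        rw [this, hB, hm, Finset.sum_mul, Finset.sum_mul, ← Finset.sum_add_distrib]
        exact Finset.sum_congr rfl fun p _ => by ring
      rw [key, key]
      refine Finset.sum_le_sum fun p hp => mul_le_mul_of_nonneg_left ?_ (hw0 p)
      obtain ⟨h1, h2⟩ := Finset.mem_filter.1 hp
      have := hastar p (hmem p h1) a'
      rwa [h2] at this
  · refine le_trans ?_ hcal
    unfold ECE
    refine Real.rpow_le_rpow (Finset.sum_nonneg fun a _ => mul_nonneg (hm0 a) (by positivity)) ?_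
      (by positivity)
    rw [← Finset.sum_fiberwise (suppF f) astar]
    refine Finset.sum_le_sum fun a _ => ?_
    rcases (hm0 a).eq_or_lt with h | ha
    · rw [← h, zero_mul]
      exact Finset.sum_nonneg fun p _ => mul_nonneg (hw0 p) (by positivity)
    have hJ := Real.rpow_arith_mean_le_arith_mean_rpow ((suppF f).filter (fun p => astar p = a))
      (fun p => marginal S f p / pmass S π a) (fun p => |kappa S f p - p|)
      (fun p _ => div_nonneg (hw0 p) ha.le)
      (by rw [← Finset.sum_div, ← hm, div_self ha.ne']) (fun p _ => abs_nonneg _) ht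
    have hbb : |b a / pmass S π a| ≤ ∑ p ∈ (suppF f).filter (fun p => astar p = a),
        marginal S f p / pmass S π a * |kappa S f p - p| := by
      rw [hb, Finset.sum_div]
      refine (Finset.abs_sum_le_sum_abs _ _).trans (Finset.sum_le_sum fun p _ => ?_)
      rw [hbk, mul_div_right_comm, abs_mul, abs_of_nonneg (div_nonneg (hw0 p) ha.le), abs_sub_comm]
    calc pmass S π a * |b a / pmass S π a| ^ t
        ≤ pmass S π a * ∑ p ∈ (suppF f).filter (fun p => astar p = a),
          marginal S f p / pmass S π a * |kappa S f p - p| ^ t :=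
          mul_le_mul_of_nonneg_left
            ((Real.rpow_le_rpow (abs_nonneg _) hbb (by positivity)).trans hJ) ha.le
      _ = _ := by
          rw [Finset.mul_sum]
          refine Finset.sum_congr rfl fun p _ => ?_
          field_simp
  · refine Finset.sum_congr rfl fun i _ => ?_
    congr 1
    rw [← Finset.sum_fiberwise (f i).support astar]
    refine Finset.sum_congr rfl fun a _ => ?_
    rw [hπ, Finset.sum_mul]
    refine Finset.sum_congr rfl fun p hp => ?_
    rw [(Finset.mem_filter.1 hp).2]
    ring

end PersuasiveCalibration
end
end
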